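/- Let a ∈ L¹(ℝ₊)^{p×p}, b ∈ L¹(ℝ₊)^{p×q}, c ∈ L¹(ℝ₋)^{q×p}, d ∈ L¹(ℝ₋)^{q×q}. If the three convolution identities a* + a + a*⋆a − c*⋆c = 0, d* + d + d*⋆d − b*⋆b = 0 and b + a*⋆b = c* + c*⋆d hold, then also the transposed identities hold: a + a* + a⋆a* − b⋆b* = 0, d + d* + d⋆d* − c⋆c* = 0, and c* + a⋆c* = b + b⋆d*. -/

import Mathlib

/-!
Adjoin the unit `e` (the Dirac mass at `0`) to the convolution algebra. The hypotheses then say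
`M* J M = J` for `M = [[e + a, b], [c, e + d]]` and `J = diag(I_p, -I_q)`, i.e. `J M* J` is a left
inverse of the square matrix `M`. Over a commutative ring a left inverse of a square matrix is also
a right inverse, so `M J M* = J`, which is the block form of the transposed identities.

To make this rigorous without building the unital convolution algebra, the argument is carried out
pointwise on the Fourier side: the entrywise Fourier transform turns convolution into the matrix
product (`FT_conv`) and `adjF` into the conjugate transpose (`FT_adjF`), the identity between
constant matrices is `transposed_of_blocks`, and the result is pulled back by injectivity of the
Fourier transform on `L¹` (`ae_eq_zero_of_fourier_eq_zero`).
-/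


open MeasureTheory Set Matrix
open scoped ComplexConjugate

noncomputable section

abbrev MatF (r s : ℕ) := ℝ → Matrix (Fin r) (Fin s) ℂ

def conv {r s u : ℕ} (f : MatF r s) (h : MatF s u) : MatF r u :=
  fun t => Matrix.of fun i j => ∫ τ : ℝ, (f (t - τ) * h τ) i j

def adjF {r s : ℕ} (f : MatF r s) : MatF s r := fun t => (f (-t))ᴴ

def L1Plus {r s : ℕ} (f : MatF r s) : Prop :=
  (∀ i j, Integrable fun t => f t i j) ∧ ∀ t < (0:ℝ), f t = 0

def L1Minus {r s : ℕ} (f : MatF r s) : Prop :=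
  (∀ i j, Integrable fun t => f t i j) ∧ ∀ t > (0:ℝ), f t = 0

def μP : Measure ℝ := volume.restrict (Ici 0)
def μM : Measure ℝ := volume.restrict (Iic 0)

abbrev L1P (n : ℕ) := Lp (Fin n → ℂ) 1 μP
abbrev L1M (n : ℕ) := Lp (Fin n → ℂ) 1 μM

def IsHP {k m : ℕ} (r : MatF k m) (H : L1M m →L[ℂ] L1P k) : Prop :=
  ∀ f : L1M m, ⇑(H f) =ᵐ[μP] fun t => ∫ s, (r (t - s)).mulVec (f s) ∂μM

def IsHM {k m : ℕ} (r : MatF k m) (H : L1P m →L[ℂ] L1M k) : Prop :=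
  ∀ f : L1P m, ⇑(H f) =ᵐ[μM] fun t => ∫ s, (r (t - s)).mulVec (f s) ∂μP

def IsTP {k m : ℕ} (r₀ : Matrix (Fin k) (Fin m) ℂ) (r : MatF k m)
    (T : L1P m →L[ℂ] L1P k) : Prop :=
  ∀ f : L1P m, ⇑(T f) =ᵐ[μP] fun t => r₀.mulVec (f t) + ∫ s, (r (t - s)).mulVec (f s) ∂μP

def IsTM {k m : ℕ} (r₀ : Matrix (Fin k) (Fin m) ℂ) (r : MatF k m)
    (T : L1M m →L[ℂ] L1M k) : Prop :=
  ∀ f : L1M m, ⇑(T f) =ᵐ[μM] fun t => r₀.mulVec (f t) + ∫ s, (r (t - s)).mulVec (f s) ∂μM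

def blockCLM {X Y Z W : Type*} [NormedAddCommGroup X] [NormedSpace ℂ X]
    [NormedAddCommGroup Y] [NormedSpace ℂ Y] [NormedAddCommGroup Z] [NormedSpace ℂ Z]
    [NormedAddCommGroup W] [NormedSpace ℂ W]
    (A : X →L[ℂ] Z) (B : Y →L[ℂ] Z) (C : X →L[ℂ] W) (D : Y →L[ℂ] W) :
    (X × Y) →L[ℂ] (Z × W) :=
  (A.comp (ContinuousLinearMap.fst ℂ X Y) + B.comp (ContinuousLinearMap.snd ℂ X Y)).prod
    (C.comp (ContinuousLinearMap.fst ℂ X Y) + D.comp (ContinuousLinearMap.snd ℂ X Y))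

def InvertibleCLM {X Y : Type*} [NormedAddCommGroup X] [NormedSpace ℂ X]
    [NormedAddCommGroup Y] [NormedSpace ℂ Y] (T : X →L[ℂ] Y) : Prop :=
  ∃ S : Y →L[ℂ] X, S.comp T = ContinuousLinearMap.id ℂ X ∧ T.comp S = ContinuousLinearMap.id ℂ Y

def AeZeroPos {r s : ℕ} (f : MatF r s) : Prop := ∀ᵐ t : ℝ, 0 < t → f t = 0
def AeZeroNeg {r s : ℕ} (f : MatF r s) : Prop := ∀ᵐ t : ℝ, t < 0 → f t = 0

def EGSol {p q : ℕ} (a : MatF p p) (b : MatF p q) (c : MatF q p) (d : MatF q q)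
    (g : MatF p q) : Prop :=
  AeZeroPos (fun t => a t + conv g c t) ∧
  AeZeroNeg (fun t => adjF g t + conv (adjF g) a t + c t) ∧
  AeZeroNeg (fun t => d t + conv (adjF g) b t) ∧
  AeZeroPos (fun t => g t + conv g d t + b t)


def colF {r s : ℕ} (f : MatF r s) (j : Fin s) : ℝ → Fin r → ℂ := fun t i => f t i j

/-- Condition (L1): `α*⋄α − γ*⋄γ = e_p`, `δ*⋄δ − β*⋄β = e_q`, `α*⋄β = γ*⋄δ`,
written out in terms of the data `a,b,c,d`. -/
def CondL1 {p q : ℕ} (a : MatF p p) (b : MatF p q) (c : MatF q p) (d : MatF q q) : Prop :=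
  (∀ᵐ t ∂(volume : Measure ℝ), adjF a t + a t + conv (adjF a) a t - conv (adjF c) c t = 0) ∧
  (∀ᵐ t ∂(volume : Measure ℝ), adjF d t + d t + conv (adjF d) d t - conv (adjF b) b t = 0) ∧
  (∀ᵐ t ∂(volume : Measure ℝ), b t + conv (adjF a) b t = adjF c t + conv (adjF c) d t)

/-- The transposed identities (conditions (C4)--(C6) in the `L¹` setting). -/
def CondL1T {p q : ℕ} (a : MatF p p) (b : MatF p q) (c : MatF q p) (d : MatF q q) : Prop :=
  (∀ᵐ t ∂(volume : Measure ℝ), a t + adjF a t + conv a (adjF a) t - conv b (adjF b) t = 0) ∧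
  (∀ᵐ t ∂(volume : Measure ℝ), d t + adjF d t + conv d (adjF d) t - conv c (adjF c) t = 0) ∧
  (∀ᵐ t ∂(volume : Measure ℝ), adjF c t + conv a (adjF c) t = b t + conv b (adjF d) t)

open scoped FourierTransform Convolution ContDiff

/-- Injectivity of the Fourier transform on `L¹(ℝ)`. By self-adjointness of `𝓕`, a function with
vanishing transform integrates to zero against every `𝓕 (𝓕⁻ φ) = φ` with `φ` a test function. -/
lemma ae_eq_zero_of_fourier_eq_zero {f : ℝ → ℂ} (hf : Integrable f) (h : ∀ ξ, 𝓕 f ξ = 0) :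
    ∀ᵐ t, f t = 0 := by
  apply ae_eq_zero_of_integral_contDiff_smul_eq_zero hf.locallyIntegrable
  intro g g_smooth g_cpt
  have hg₁ : HasCompactSupport (Complex.ofRealCLM ∘ g) := g_cpt.comp_left rfl
  have hg₂ : ContDiff ℝ ∞ (Complex.ofRealCLM ∘ g) := by fun_prop
  let φ : SchwartzMap ℝ ℂ := hg₁.toSchwartzMap hg₂
  let ψ : SchwartzMap ℝ ℂ := 𝓕⁻ φ
  have hψ : 𝓕 (ψ : ℝ → ℂ) = φ := by
    rw [← SchwartzMap.fourier_coe]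
    exact congrArg _ (FourierTransform.fourier_fourierInv_eq φ)
  have key : ∫ ξ, 𝓕 f ξ • ψ ξ = ∫ x, f x • 𝓕 (ψ : ℝ → ℂ) x := by
    simpa using! VectorFourier.integral_fourierIntegral_smul_eq_flip (L := innerₗ ℝ)
      Real.continuous_fourierChar continuous_inner hf ψ.integrable
  rw [hψ] at key
  simp only [h, zero_smul, integral_zero] at key
  rw [key]
  refine integral_congr_ae (Filter.Eventually.of_forall fun x => ?_)
  change g x • f x = f x • (g x : ℂ)
  rw [Complex.real_smul, smul_eq_mul, mul_comm]

/-- Entrywise integrability of a matrix function. -/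
def IntF {r s : ℕ} (f : MatF r s) : Prop := ∀ i j, Integrable fun t => f t i j

/-- The entrywise Fourier transform of a matrix function. -/
def FT {r s : ℕ} (f : MatF r s) (ξ : ℝ) : Matrix (Fin r) (Fin s) ℂ :=
  Matrix.of fun i j => 𝓕 (fun t => f t i j) ξ

lemma IntF.add {r s : ℕ} {f g : MatF r s} (hf : IntF f) (hg : IntF g) :
    IntF fun t => f t + g t := fun i j => (hf i j).add (hg i j)

lemma IntF.sub {r s : ℕ} {f g : MatF r s} (hf : IntF f) (hg : IntF g) :
    IntF fun t => f t - g t := fun i j => (hf i j).sub (hg i j)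

lemma IntF.adjF {r s : ℕ} {f : MatF r s} (hf : IntF f) : IntF (adjF f) := fun i j => by
  have := (Complex.conjCLE.toContinuousLinearMap).integrable_comp (hf j i).comp_neg
  simpa [_root_.adjF, Matrix.conjTranspose_apply, Function.comp_def] using this

/-- `conv` agrees entrywise with a sum of scalar convolutions, but only almost everywhere: at
points where a scalar convolution integral diverges the integral of the sum need not split. -/
lemma conv_ae {r s u : ℕ} {f : MatF r s} {h : MatF s u} (hf : IntF f) (hh : IntF h)
    (i : Fin r) (j : Fin u) :
    (fun t => conv f h t i j) =ᵐ[volume] fun t => ∑ k,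
      ((fun t => h t k j) ⋆[ContinuousLinearMap.mul ℂ ℂ] (fun t => f t i k)) t := by
  have hex : ∀ᵐ t, ∀ k, ConvolutionExistsAt (fun t => h t k j) (fun t => f t i k) t
      (ContinuousLinearMap.mul ℂ ℂ) volume :=
    ae_all_iff.2 fun k => (hh k j).ae_convolution_exists _ (hf i k)
  filter_upwards [hex] with t ht
  have ht' : ∀ k, Integrable fun τ => f (t - τ) i k * h τ k j := fun k => by
    have := ht k
    simpa [ConvolutionExistsAt, mul_comm] using this
  simp only [conv, Matrix.of_apply, Matrix.mul_apply]
  rw [integral_finsetSum _ fun k _ => ht' k]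
  refine Finset.sum_congr rfl fun k _ => ?_
  simp [convolution_def, mul_comm]

lemma integrable_scalar_conv {f g : ℝ → ℂ} (hf : Integrable f) (hg : Integrable g) :
    Integrable (f ⋆[ContinuousLinearMap.mul ℂ ℂ] g) := hf.integrable_convolution _ hg

lemma IntF.conv {r s u : ℕ} {f : MatF r s} {h : MatF s u} (hf : IntF f) (hh : IntF h) :
    IntF (conv f h) := fun i j =>
  (integrable_finsetSum _ fun k _ => integrable_scalar_conv (hh k j) (hf i k)).congr
    (conv_ae hf hh i j).symm

lemma fourier_add_of_integrable {f g : ℝ → ℂ} (hf : Integrable f) (hg : Integrable g) (ξ : ℝ) :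
    𝓕 (fun t => f t + g t) ξ = 𝓕 f ξ + 𝓕 g ξ := by
  simp only [Real.fourier_eq, smul_add]
  exact integral_add ((Real.fourierIntegral_convergent_iff ξ).2 hf)
    ((Real.fourierIntegral_convergent_iff ξ).2 hg)

lemma fourier_sub_of_integrable {f g : ℝ → ℂ} (hf : Integrable f) (hg : Integrable g) (ξ : ℝ) :
    𝓕 (fun t => f t - g t) ξ = 𝓕 f ξ - 𝓕 g ξ := by
  simp only [Real.fourier_eq, smul_sub]
  exact integral_sub ((Real.fourierIntegral_convergent_iff ξ).2 hf)
    ((Real.fourierIntegral_convergent_iff ξ).2 hg)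

lemma fourier_sum_of_integrable {n : ℕ} {f : Fin n → ℝ → ℂ} (hf : ∀ k, Integrable (f k)) (ξ : ℝ) :
    𝓕 (fun t => ∑ k, f k t) ξ = ∑ k, 𝓕 (f k) ξ := by
  simp only [Real.fourier_eq, Finset.smul_sum]
  exact integral_finsetSum _ fun k _ => (Real.fourierIntegral_convergent_iff ξ).2 (hf k)

lemma FT_add {r s : ℕ} {f g : MatF r s} (hf : IntF f) (hg : IntF g) (ξ : ℝ) :
    FT (fun t => f t + g t) ξ = FT f ξ + FT g ξ := by
  ext i j
  exact fourier_add_of_integrable (hf i j) (hg i j) ξ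

lemma FT_sub {r s : ℕ} {f g : MatF r s} (hf : IntF f) (hg : IntF g) (ξ : ℝ) :
    FT (fun t => f t - g t) ξ = FT f ξ - FT g ξ := by
  ext i j
  exact fourier_sub_of_integrable (hf i j) (hg i j) ξ

lemma FT_conv {r s u : ℕ} {f : MatF r s} {h : MatF s u} (hf : IntF f) (hh : IntF h) (ξ : ℝ) :
    FT (conv f h) ξ = FT f ξ * FT h ξ := by
  ext i j
  simp only [FT, Matrix.of_apply, Matrix.mul_apply]
  rw [Real.fourier_congr_ae (conv_ae hf hh i j),
    fourier_sum_of_integrable fun k => integrable_scalar_conv (hh k j) (hf i k)]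
  refine Finset.sum_congr rfl fun k _ => ?_
  rw [Real.fourier_mul_convolution_eq (hh k j) (hf i k), mul_comm]

lemma FT_adjF {r s : ℕ} (f : MatF r s) (ξ : ℝ) : FT (adjF f) ξ = (FT f ξ)ᴴ := by
  ext i j
  simp only [FT, Matrix.of_apply, Matrix.conjTranspose_apply, adjF, Real.fourier_eq]
  rw [← integral_neg_eq_self, Complex.star_def, ← integral_conj]
  refine integral_congr_ae (Filter.Eventually.of_forall fun t => ?_)
  simp [Circle.smul_def, AddChar.map_neg_eq_inv]

lemma FT_congr {r s : ℕ} {f g : MatF r s} (h : ∀ᵐ t, f t = g t) (ξ : ℝ) : FT f ξ = FT g ξ := by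
  ext i j
  exact Real.fourier_congr_ae (h.mono fun t ht => by simp only [ht]) ξ

lemma FT_zero {r s : ℕ} (ξ : ℝ) : FT (fun _ => (0 : Matrix (Fin r) (Fin s) ℂ)) ξ = 0 := by
  ext i j
  simp [FT, Real.fourier_eq]

lemma ae_eq_of_FT_eq {r s : ℕ} {f g : MatF r s} (hf : IntF f) (hg : IntF g)
    (h : ∀ ξ, FT f ξ = FT g ξ) : ∀ᵐ t, f t = g t := by
  have key : ∀ᵐ t, ∀ i j, f t i j - g t i j = 0 := by
    refine ae_all_iff.2 fun i => ae_all_iff.2 fun j => ?_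
    refine ae_eq_zero_of_fourier_eq_zero ((hf i j).sub (hg i j)) fun ξ => ?_
    have := congrFun (congrFun (h ξ) i) j
    simp only [FT, Matrix.of_apply] at this
    exact (fourier_sub_of_integrable (hf i j) (hg i j) ξ).trans (sub_eq_zero.2 this)
  filter_upwards [key] with t ht
  ext i j
  exact sub_eq_zero.1 (ht i j)

/-- The pointwise identity: the left inverse `[[1 + Aᴴ, -Cᴴ], [-Bᴴ, 1 + Dᴴ]]` of
`[[1 + A, B], [C, 1 + D]]` is also a right inverse. -/
lemma transposed_of_blocks {p q : ℕ} {A : Matrix (Fin p) (Fin p) ℂ} {B : Matrix (Fin p) (Fin q) ℂ}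
    {C : Matrix (Fin q) (Fin p) ℂ} {D : Matrix (Fin q) (Fin q) ℂ}
    (h1 : Aᴴ + A + Aᴴ * A - Cᴴ * C = 0) (h2 : Dᴴ + D + Dᴴ * D - Bᴴ * B = 0)
    (h3 : B + Aᴴ * B = Cᴴ + Cᴴ * D) :
    A + Aᴴ + A * Aᴴ - B * Bᴴ = 0 ∧ D + Dᴴ + D * Dᴴ - C * Cᴴ = 0 ∧
      Cᴴ + A * Cᴴ = B + B * Dᴴ := by
  have h4 : Bᴴ + Bᴴ * A = C + Dᴴ * C := by
    simpa using congrArg Matrix.conjTranspose h3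
  have left : fromBlocks (1 + Aᴴ) (-Cᴴ) (-Bᴴ) (1 + Dᴴ) * fromBlocks (1 + A) B C (1 + D) = 1 := by
    rw [fromBlocks_multiply, ← fromBlocks_one, fromBlocks_inj]
    simp only [mul_add, add_mul, one_mul, mul_one, Matrix.mul_one, Matrix.one_mul, Matrix.neg_mul,
      Matrix.mul_add, Matrix.add_mul]
    refine ⟨?_, ?_, ?_, ?_⟩
    · rw [← sub_eq_zero, ← h1]; abel
    · rw [h3]; abel
    · rw [← neg_add, h4]; abel
    · rw [← sub_eq_zero, ← h2]; abel
  have right := mul_eq_one_comm.1 left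
  rw [fromBlocks_multiply, ← fromBlocks_one, fromBlocks_inj] at right
  simp only [mul_add, add_mul, one_mul, mul_one, Matrix.mul_one, Matrix.one_mul, Matrix.mul_neg,
      Matrix.mul_add, Matrix.add_mul] at right
  obtain ⟨r1, r2, -, r4⟩ := right
  refine ⟨?_, ?_, ?_⟩
  · rw [← sub_eq_zero] at r1; rw [← r1]; abel
  · rw [← sub_eq_zero] at r4; rw [← r4]; abel
  · rw [← sub_eq_zero, ← neg_eq_zero, ← r2]; abel

/-- conditions (C1)--(C3) imply the transposed conditions (C4)--(C6). -/
theorem stmt5 {p q : ℕ}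
    (a : MatF p p) (b : MatF p q) (c : MatF q p) (d : MatF q q)
    (ha : L1Plus a) (hb : L1Plus b) (hc : L1Minus c) (hd : L1Minus d)
    (h : CondL1 a b c d) : CondL1T a b c d := by
  obtain ⟨h1, h2, h3⟩ := h
  have a0 : IntF a := ha.1
  have b0 : IntF b := hb.1
  have c0 : IntF c := hc.1
  have d0 : IntF d := hd.1
  have a1 := a0.adjF
  have b1 := b0.adjF
  have c1 := c0.adjF
  have d1 := d0.adjF
  have z {r s : ℕ} : IntF fun _ => (0 : Matrix (Fin r) (Fin s) ℂ) := fun _ _ => by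
    simp
  have key : ∀ ξ, _ := fun ξ => transposed_of_blocks
    (A := FT a ξ) (B := FT b ξ) (C := FT c ξ) (D := FT d ξ)
    (by
      have := FT_congr h1 ξ
      rwa [FT_sub ((a1.add a0).add (a1.conv a0)) (c1.conv c0), FT_add (a1.add a0) (a1.conv a0),
        FT_add a1 a0, FT_conv a1 a0, FT_conv c1 c0, FT_adjF, FT_adjF, FT_zero] at this)
    (by
      have := FT_congr h2 ξ
      rwa [FT_sub ((d1.add d0).add (d1.conv d0)) (b1.conv b0), FT_add (d1.add d0) (d1.conv d0),
        FT_add d1 d0, FT_conv d1 d0, FT_conv b1 b0, FT_adjF, FT_adjF, FT_zero] at this)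
    (by
      have := FT_congr h3 ξ
      rwa [FT_add b0 (a1.conv b0), FT_add c1 (c1.conv d0), FT_conv a1 b0, FT_conv c1 d0,
        FT_adjF, FT_adjF] at this)
  refine ⟨?_, ?_, ?_⟩
  · refine ae_eq_of_FT_eq (((a0.add a1).add (a0.conv a1)).sub (b0.conv b1)) z fun ξ => ?_
    rw [FT_sub ((a0.add a1).add (a0.conv a1)) (b0.conv b1), FT_add (a0.add a1) (a0.conv a1),
      FT_add a0 a1, FT_conv a0 a1, FT_conv b0 b1, FT_adjF, FT_adjF, FT_zero]
    exact (key ξ).1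
  · refine ae_eq_of_FT_eq (((d0.add d1).add (d0.conv d1)).sub (c0.conv c1)) z fun ξ => ?_
    rw [FT_sub ((d0.add d1).add (d0.conv d1)) (c0.conv c1), FT_add (d0.add d1) (d0.conv d1),
      FT_add d0 d1, FT_conv d0 d1, FT_conv c0 c1, FT_adjF, FT_adjF, FT_zero]
    exact (key ξ).2.1
  · refine ae_eq_of_FT_eq (c1.add (a0.conv c1)) (b0.add (b0.conv d1)) fun ξ => ?_
    rw [FT_add c1 (a0.conv c1), FT_add b0 (b0.conv d1), FT_conv a0 c1, FT_conv b0 d1,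
      FT_adjF, FT_adjF]
    exact (key ξ).2.2
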